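/- Let n ≥ 1, let f_n : ℕⁿ → ℝ be symmetric with finite support, and let k ∈ ℕ. Then E[J_n(f_n) | 𝓕_k] = J_n(f_n·1_{[0,k]ⁿ}) almost surely, where (f_n·1_{[0,k]ⁿ})(i_1,…,i_n) equals f_n(i_1,…,i_n) if i_j ≤ k for all j, and 0 otherwise. -/

import Mathlib

open MeasureTheory
open scoped Classical

/-- The discrete multiple stochastic integral
`J_n(f_n) = ∑_{(i_1,…,i_n) ∈ Δ_n} f_n(i_1,…,i_n) Y_{i_1} ⋯ Y_{i_n}`,
where `Δ_n` is the set of `n`-tuples of pairwise distinct indices. -/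
noncomputable def multipleInt {Ω : Type*} (Y : ℕ → Ω → ℝ) {n : ℕ}
    (f : (Fin n → ℕ) → ℝ) (ω : Ω) : ℝ :=
  ∑' i : Fin n → ℕ, if Function.Injective i then f i * ∏ j, Y (i j) ω else 0

lemma aux_meas {Ω : Type*} (Y : ℕ → Ω → ℝ) (𝓕 : ℕ → MeasurableSpace Ω)
    (h𝓕succ : ∀ n, 𝓕 (n + 1) =
      MeasurableSpace.comap (fun ω (i : Fin (n + 1)) => Y i ω) inferInstance)
    {l m : ℕ} (h : l < m) : Measurable[𝓕 m] (Y l) := by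
  obtain ⟨m, rfl⟩ : ∃ p, m = p + 1 := ⟨m - 1, by omega⟩
  rw [h𝓕succ]
  exact (measurable_pi_apply (⟨l, h⟩ : Fin (m + 1))).comp
    (comap_measurable (fun ω (i : Fin (m + 1)) => Y i ω))

lemma aux_mono {Ω : Type*} (Y : ℕ → Ω → ℝ) (𝓕 : ℕ → MeasurableSpace Ω)
    (h𝓕succ : ∀ n, 𝓕 (n + 1) =
      MeasurableSpace.comap (fun ω (i : Fin (n + 1)) => Y i ω) inferInstance)
    {k m : ℕ} (h : k + 1 ≤ m) : 𝓕 (k + 1) ≤ 𝓕 m := by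
  rw [h𝓕succ k]
  apply Measurable.comap_le
  letI := 𝓕 m
  exact measurable_pi_lambda _ (fun i => aux_meas Y 𝓕 h𝓕succ (by omega))

lemma aux_int {Ω : Type*} {mΩ : MeasurableSpace Ω} (μ : Measure Ω) [IsProbabilityMeasure μ]
    (Y : ℕ → Ω → ℝ) (hYmeas : ∀ k, Measurable (Y k))
    (hYbdd : ∀ k, ∃ C : ℝ, ∀ ω, |Y k ω| ≤ C) {n : ℕ} (i : Fin n → ℕ) :
    Integrable (fun ω => ∏ j, Y (i j) ω) μ := by
  choose C hC using hYbdd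
  refine Integrable.of_bound
    (Finset.measurable_prod _ fun j _ => hYmeas (i j)).aestronglyMeasurable (∏ j, C (i j))
    (Filter.Eventually.of_forall fun ω => ?_)
  rw [Real.norm_eq_abs, Finset.abs_prod]
  exact Finset.prod_le_prod (fun _ _ => abs_nonneg _) (fun j _ => hC _ _)

lemma aux_term {Ω : Type*} {mΩ : MeasurableSpace Ω} (μ : Measure Ω) [IsProbabilityMeasure μ]
    (Y : ℕ → Ω → ℝ) (hYmeas : ∀ k, Measurable (Y k))
    (hYbdd : ∀ k, ∃ C : ℝ, ∀ ω, |Y k ω| ≤ C)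
    (𝓕 : ℕ → MeasurableSpace Ω)
    (h𝓕succ : ∀ n, 𝓕 (n + 1) =
      MeasurableSpace.comap (fun ω (i : Fin (n + 1)) => Y i ω) inferInstance)
    (h𝓕le : ∀ n, 𝓕 n ≤ mΩ)
    (hY0 : ∀ n, μ[Y n | 𝓕 n] =ᵐ[μ] 0)
    {n : ℕ} (i : Fin n → ℕ) (hi : Function.Injective i) (k : ℕ) :
    μ[fun ω => ∏ j, Y (i j) ω | 𝓕 (k + 1)]
      =ᵐ[μ] fun ω => if ∀ j, i j ≤ k then ∏ j, Y (i j) ω else 0 := by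
  have hint := aux_int μ Y hYmeas hYbdd i
  by_cases h : ∀ j, i j ≤ k
  · simp only [h, implies_true, if_true]
    rw [condExp_of_stronglyMeasurable (h𝓕le _) _ hint]
    apply Measurable.stronglyMeasurable
    exact Finset.measurable_prod _ fun j _ => aux_meas Y 𝓕 h𝓕succ (by have := h j; omega)
  · simp only [h, if_false]
    push Not at h
    obtain ⟨j1, hj1⟩ := h
    obtain ⟨j0, -, hj0⟩ := Finset.exists_max_image Finset.univ i ⟨j1, Finset.mem_univ _⟩
    have hk : k + 1 ≤ i j0 := by have := hj0 j1 (Finset.mem_univ _); omega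
    have heq : (fun ω => ∏ j, Y (i j) ω)
        = (fun ω => ∏ j ∈ Finset.univ.erase j0, Y (i j) ω) * Y (i j0) := by
      funext ω
      exact (Finset.prod_erase_mul Finset.univ (fun j => Y (i j) ω) (Finset.mem_univ j0)).symm
    have hsm : StronglyMeasurable[𝓕 (i j0)]
        (fun ω => ∏ j ∈ Finset.univ.erase j0, Y (i j) ω) := by
      apply Measurable.stronglyMeasurable
      refine Finset.measurable_prod _ fun j hj => aux_meas Y 𝓕 h𝓕succ ?_
      exact lt_of_le_of_ne (hj0 j (Finset.mem_univ _))
        (fun e => (Finset.ne_of_mem_erase hj) (hi e))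
    have hYint : Integrable (Y (i j0)) μ := by
      obtain ⟨C, hC⟩ := hYbdd (i j0)
      exact Integrable.of_bound (hYmeas _).aestronglyMeasurable C
        (Filter.Eventually.of_forall hC)
    have h1 : μ[fun ω => ∏ j, Y (i j) ω | 𝓕 (i j0)] =ᵐ[μ] 0 := by
      rw [heq] at hint ⊢
      filter_upwards [condExp_mul_of_stronglyMeasurable_left hsm hint hYint, hY0 (i j0)]
        with ω h1 h2
      rw [h1, Pi.mul_apply, h2]
      simp
    refine (condExp_condExp_of_le (aux_mono Y 𝓕 h𝓕succ hk) (h𝓕le _)).symm.trans ?_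
    refine (condExp_congr_ae h1).trans ?_
    rw [condExp_zero]
    rfl

/-- **Conditional expectation of a multiple stochastic integral.**
`𝓕 n` plays the role of the σ-algebra `𝓕_{n-1}` of the paper (so the paper's `𝓕_k`
is `𝓕 (k+1)` here).  For `n ≥ 1` and `f_n : ℕⁿ → ℝ` symmetric with finite support,
`E[J_n(f_n) | 𝓕_k] = J_n(f_n · 1_{[0,k]ⁿ})` almost surely. -/
theorem multipleInt_condexp
    {Ω : Type*} {mΩ : MeasurableSpace Ω} (μ : Measure Ω) [IsProbabilityMeasure μ]
    (Y : ℕ → Ω → ℝ) (hYmeas : ∀ k, Measurable (Y k))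
    (hYbdd : ∀ k, ∃ C : ℝ, ∀ ω, |Y k ω| ≤ C)
    (𝓕 : ℕ → MeasurableSpace Ω)
    (h𝓕0 : 𝓕 0 = ⊥)
    (h𝓕succ : ∀ n, 𝓕 (n + 1) =
      MeasurableSpace.comap (fun ω (i : Fin (n + 1)) => Y i ω) inferInstance)
    (h𝓕le : ∀ n, 𝓕 n ≤ mΩ)
    (hY0 : ∀ n, μ[Y n | 𝓕 n] =ᵐ[μ] 0)
    (hY1 : ∀ n, μ[fun ω => (Y n ω) ^ 2 | 𝓕 n] =ᵐ[μ] fun _ => 1)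
    (n : ℕ) (hn : 1 ≤ n)
    (f : (Fin n → ℕ) → ℝ)
    (hfsymm : ∀ (σ : Equiv.Perm (Fin n)) (i : Fin n → ℕ), f (i ∘ σ) = f i)
    (hffin : (Function.support f).Finite)
    (k : ℕ) :
    μ[multipleInt Y f | 𝓕 (k + 1)]
      =ᵐ[μ] multipleInt Y (fun i => if ∀ j, i j ≤ k then f i else 0) := by
  have e : ∀ g : (Fin n → ℕ) → ℝ, (∀ i, f i = 0 → g i = 0) → multipleInt Y g =
      ∑ i ∈ hffin.toFinset.filter (fun i => Function.Injective i),
        g i • fun ω => ∏ j, Y (i j) ω := by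
    intro g hg
    funext ω
    rw [multipleInt, tsum_eq_sum (s := hffin.toFinset), ← Finset.sum_filter]
    · simp [Finset.sum_apply]
    · intro i hi
      have : g i = 0 := hg i (by simpa using hi)
      simp [this]
  rw [e f (fun _ h => h), e _ (fun i h => by simp [h])]
  refine (condExp_finsetSum (fun i _ => (aux_int μ Y hYmeas hYbdd i).smul (f i)) _).trans ?_
  have key : ∀ᵐ ω ∂μ, ∀ i ∈ hffin.toFinset.filter (fun i => Function.Injective i),
      (μ[f i • fun ω => ∏ j, Y (i j) ω | 𝓕 (k + 1)]) ω
        = (if ∀ j, i j ≤ k then f i else 0) * ∏ j, Y (i j) ω := by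
    rw [Finset.eventually_all]
    intro i hi
    filter_upwards [condExp_smul (μ := μ) (f i) (fun ω => ∏ j, Y (i j) ω) (𝓕 (k + 1)),
      aux_term μ Y hYmeas hYbdd 𝓕 h𝓕succ h𝓕le hY0 i (Finset.mem_filter.1 hi).2 k] with ω h1 h2
    rw [h1, Pi.smul_apply, h2]
    split_ifs <;> simp
  filter_upwards [key] with ω hω
  rw [Finset.sum_apply, Finset.sum_apply]
  exact Finset.sum_congr rfl fun i hi => hω i hi
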